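/- Let k ≥ 3 and q ≥ 1. If every continuous map g : Δ_k^{(k+1)(q-1)} → ℝ^k admits a Tverberg partition {S_1, …, S_q} with |S_i| ≤ k+1 for all i, then every continuous map f : Δ_{k-1}^{(k+1)(q-1)} → ℝ^k admits a winding partition. -/

import Mathlib

open scoped BigOperators

noncomputable section

/-- Euclidean space `ℝ^d`. -/
abbrev Euc (d : ℕ) : Type := EuclideanSpace ℝ (Fin d)

/-- The standard `N`-simplex `Δ^N ⊆ ℝ^{N+1}`. -/
def stdSimp (N : ℕ) : Set (Fin (N+1) → ℝ) :=
  {x | (∀ i, 0 ≤ x i) ∧ ∑ i, x i = 1}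

/-- The face `σ_S` of `Δ^N` spanned by the vertices in `S`. -/
def simpFace {N : ℕ} (S : Finset (Fin (N+1))) : Set (Fin (N+1) → ℝ) :=
  {x ∈ stdSimp N | ∀ i ∉ S, x i = 0}

/-- The `k`-skeleton `Δ_k^N` of the standard `N`-simplex. -/
def skel (N k : ℕ) : Set (Fin (N+1) → ℝ) :=
  {x ∈ stdSimp N | {i | x i ≠ 0}.ncard ≤ k + 1}

/-- A Tverberg partition for (the relevant restriction of) `f`: a set of `q`
pairwise disjoint nonempty vertex subsets whose faces have images with a common point. -/
def IsTverbergPartition (q : ℕ) {N d : ℕ}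
    (f : (Fin (N+1) → ℝ) → Euc d) (P : Finset (Finset (Fin (N+1)))) : Prop :=
  P.card = q ∧ (∀ S ∈ P, S.Nonempty) ∧
  (∀ S ∈ P, ∀ T ∈ P, S ≠ T → Disjoint S T) ∧
  (⋂ S ∈ P, f '' simpFace S).Nonempty

/-- The boundary `∂σ_S` of the face `σ_S`. -/
def simpFaceBoundary {N : ℕ} (S : Finset (Fin (N+1))) : Set (Fin (N+1) → ℝ) :=
  {x ∈ simpFace S | ∃ i ∈ S, x i = 0}

/-- `p ∈ W_{≠0}(f|_{∂σ_S})`: either `p` is in the image of the boundary, or the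
corestriction of `f|_{∂σ_S}` to `ℝ^d \ {p}` is not nullhomotopic (there is no
continuous map agreeing with `f` on `∂σ_S` that is homotopic to a constant). -/
def InWne (d : ℕ) {N : ℕ} (f : (Fin (N+1) → ℝ) → Euc d)
    (S : Finset (Fin (N+1))) (p : Euc d) : Prop :=
  p ∈ f '' simpFaceBoundary S ∨
  ¬ ∃ (g : C(↥(simpFaceBoundary S), ↥({p}ᶜ : Set (Euc d))))
      (y : ↥({p}ᶜ : Set (Euc d))),
      (∀ x : ↥(simpFaceBoundary S), (g x : Euc d) = f ↑x) ∧
      g.Homotopic (ContinuousMap.const _ y)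

/-- A winding partition (in dimension `d`) for `f` defined on the `(d-1)`-skeleton:
`q` pairwise disjoint nonempty vertex subsets, each of size at most `d+1`, together
with a winding point `p`. -/
def IsWindingPartition (d q : ℕ) {N : ℕ}
    (f : (Fin (N+1) → ℝ) → Euc d) (P : Finset (Finset (Fin (N+1)))) : Prop :=
  P.card = q ∧ (∀ S ∈ P, S.Nonempty) ∧ (∀ S ∈ P, S.card ≤ d + 1) ∧
  (∀ S ∈ P, ∀ T ∈ P, S ≠ T → Disjoint S T) ∧
  ∃ p : Euc d, ∀ S ∈ P,
    (S.card ≤ d → p ∈ f '' simpFace S) ∧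
    (S.card = d + 1 → InWne d f S p)

/-- **Borsuk homotopy extension** into an open subset `U` of `ℝ^k`: if the start of a homotopy in
`U` defined on a closed set extends to a map into `U`, then so does its end. -/
lemma exists_extension_of_homotopy {X : Type*} [TopologicalSpace X] [CompactSpace X] [T2Space X]
    {k : ℕ} {A : Set X} (hA : IsClosed A) {U : Set (Euc k)} (hU : IsOpen U)
    (h : C(A × unitInterval, Euc k)) (hh : ∀ z, h z ∈ U) (G₀ : C(X, Euc k))
    (hG₀ : ∀ x, G₀ x ∈ U) (h₀ : ∀ a : A, h (a, 0) = G₀ a) :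
    ∃ G : C(X, Euc k), (∀ x, G x ∈ U) ∧ ∀ a : A, G a = h (a, 1) := by
  have he : Topology.IsClosedEmbedding
      (fun z : A × unitInterval => ((z.1 : X), z.2)) :=
    hA.isClosedEmbedding_subtypeVal.prodMap Topology.IsClosedEmbedding.id
  obtain ⟨F, hF⟩ := ContinuousMap.exists_extension he h
  have hF' : ∀ (a : A) (t : unitInterval), F (a, t) = h (a, t) := fun a t =>
    DFunLike.congr_fun hF (a, t)
  set F₂ : X × unitInterval → Euc k := fun z => F z - F (z.1, 0) + G₀ z.1 with hF₂
  have hF₂c : Continuous F₂ := by fun_prop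
  obtain ⟨u, v, hu, -, hAu, hv, huv⟩ := generalized_tube_lemma hA.isCompact
    (isCompact_univ (X := unitInterval)) (hU.preimage hF₂c) (by
      rintro ⟨x, t⟩ ⟨hx, -⟩
      have : F₂ (x, t) = h (⟨x, hx⟩, t) := by
        simp only [hF₂]
        rw [hF' ⟨x, hx⟩ t, hF' ⟨x, hx⟩ 0, h₀ ⟨x, hx⟩]
        simp
      simpa [this] using hh _)
  obtain ⟨l, hl0, hl1, hl⟩ := exists_continuous_zero_one_of_isClosed hu.isClosed_compl hA
    (Set.disjoint_left.2 fun x hx hx' => hx (hAu hx'))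
  let l' : X → unitInterval := fun x => ⟨l x, hl x⟩
  have hl' : Continuous l' := by fun_prop
  refine ⟨⟨fun x => F₂ (x, l' x), by fun_prop⟩, fun x => ?_, fun a => ?_⟩
  · by_cases hx : x ∈ u
    · exact huv ⟨hx, hv (Set.mem_univ _)⟩
    · have : l' x = 0 := Subtype.ext (hl0 hx)
      simp [hF₂, this, hG₀]
  · have : l' a = 1 := Subtype.ext (hl1 a.2)
    simp [hF₂, this, hF', h₀]

/-- A continuous map from a compact subset of a low-dimensional space can be perturbed off any
finite set of points. -/
lemma exists_perturbation_avoiding {X : Type*} [TopologicalSpace X] {V W : Type*}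
    [NormedAddCommGroup V] [NormedSpace ℝ V] [FiniteDimensional ℝ V]
    [NormedAddCommGroup W] [NormedSpace ℝ W] [FiniteDimensional ℝ W]
    {e : X → V} (he : Topology.IsClosedEmbedding e)
    (hVW : Module.finrank ℝ V < Module.finrank ℝ W)
    (u : C(X, W)) {T : Set W} (hT : T.Finite) {ε : ℝ} (hε : 0 < ε) :
    ∃ u' : C(X, W), ∀ x, ‖u' x - u x‖ < ε ∧ u' x ∉ T := by
  have : TietzeExtension W := TietzeExtension.of_tvs ℝ
  obtain ⟨F, hF⟩ := ContinuousMap.exists_extension he u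
  have hF' : ∀ x, F (e x) = u x := fun x => DFunLike.congr_fun hF x
  obtain ⟨g, hg, hgF, -⟩ := F.continuous.exists_contDiff_approx 1
    (continuous_const (y := ε / 2)) (fun _ => half_pos hε)
  have hd : Dense (⋃ t ∈ T, Set.range fun v => t - g v)ᶜ := by
    apply dense_compl_of_dimH_lt_finrank
    rw [dimH_bUnion hT.countable]
    refine lt_of_le_of_lt (iSup₂_le fun t _ => ?_) (Nat.cast_lt.2 hVW)
    exact ContDiff.dimH_range_le (contDiff_const.sub hg)
  obtain ⟨w, hw, hwε⟩ := hd.exists_dist_lt 0 (half_pos hε)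
  refine ⟨⟨fun x => g (e x) + w, (hg.continuous.comp he.continuous).add continuous_const⟩,
    fun x => ⟨?_, fun hx => hw ?_⟩⟩
  · have h1 := hgF (e x)
    rw [hF', dist_eq_norm] at h1
    rw [dist_zero_left] at hwε
    calc ‖g (e x) + w - u x‖ = ‖(g (e x) - u x) + w‖ := by congr 1; abel
      _ ≤ ‖g (e x) - u x‖ + ‖w‖ := norm_add_le _ _
      _ < ε := by linarith
  · refine Set.mem_biUnion hx ⟨e x, ?_⟩
    simp

/-- The linear map inserting a zero `i`-th coordinate. -/
def insertZero {k : ℕ} (i : Fin k) : ({j // j ≠ i} → ℝ) →L[ℝ] Euc k :=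
  LinearMap.toContinuousLinearMap
    { toFun := fun z => WithLp.toLp 2 fun j => if h : j ≠ i then z ⟨j, h⟩ else 0
      map_add' := fun z w => by ext j; by_cases h : j = i <;> simp [h]
      map_smul' := fun c z => by ext j; by_cases h : j = i <;> simp [h] }

lemma insertZero_apply_self {k : ℕ} (i : Fin k) (z : {j // j ≠ i} → ℝ) :
    insertZero i z i = 0 := by
  simp [insertZero]

lemma insertZero_apply_of_ne {k : ℕ} (i : Fin k) (z : {j // j ≠ i} → ℝ) {j : Fin k} (h : j ≠ i) :
    insertZero i z j = z ⟨j, h⟩ := by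
  simp [insertZero, h]

lemma exists_pos_forall_norm_sub_lt_notMem {X : Type*} [TopologicalSpace X] [CompactSpace X]
    {E : Type*} [NormedAddCommGroup E] (a : C(X, E)) {P : Set E} (hP : P.Finite)
    (ha : ∀ x, a x ∉ P) : ∃ ε > 0, ∀ x y, ‖y - a x‖ < ε → y ∉ P := by
  obtain ⟨δ, hδ, h⟩ := (isCompact_range a.continuous).exists_thickening_subset_open
    hP.isClosed.isOpen_compl (by rintro _ ⟨x, rfl⟩; exact ha x)
  refine ⟨δ, hδ, fun x y hy => h ?_⟩
  exact Metric.mem_thickening_iff.2 ⟨a x, ⟨x, rfl⟩, by rwa [dist_eq_norm]⟩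

/-- General position: two maps `a`, `b` from a low-dimensional compact space which agree on `A`
can be perturbed relative to `A` so that no point lies both on a ray above `P` (for `a`) and on a
ray below `Q` (for `b`). -/
lemma exists_perturbation_disjoint_rays {X : Type*} [TopologicalSpace X] [CompactSpace X]
    [T2Space X] {V : Type*} [NormedAddCommGroup V] [NormedSpace ℝ V] [FiniteDimensional ℝ V]
    {e : X → V} (he : Topology.IsClosedEmbedding e) {k : ℕ}
    (hV : Module.finrank ℝ V < 2 * (k - 1)) {A : Set X} (hA : IsClosed A)
    (a b : C(X, Euc k)) (hab : ∀ x ∈ A, a x = b x) {P Q : Set (Euc k)} (hP : P.Finite)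
    (hQ : Q.Finite) (i : Fin k) (hPQ : ∀ p ∈ P, ∀ q ∈ Q, q i < p i)
    (ha : ∀ x, a x ∉ P) (hb : ∀ x, b x ∉ Q) :
    ∃ a' b' : C(X, Euc k), (∀ x ∈ A, a' x = a x) ∧ (∀ x ∈ A, b' x = a x) ∧
      (∀ x, a' x ∉ P) ∧ (∀ x, b' x ∉ Q) ∧
      ∀ x, ∀ p ∈ P, ∀ q ∈ Q, (∀ j ≠ i, a' x j = p j) → p i ≤ a' x i →
        (∀ j ≠ i, b' x j = q j) → q i < b' x i := by
  obtain ⟨ε₁, hε₁, h₁⟩ := exists_pos_forall_norm_sub_lt_notMem a hP ha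
  obtain ⟨ε₂, hε₂, h₂⟩ := exists_pos_forall_norm_sub_lt_notMem b hQ hb
  let π : Euc k → ({j // j ≠ i} → ℝ) := fun x j => x j
  have hπ : Continuous π := by fun_prop
  let u : C(X, ({j // j ≠ i} → ℝ) × ({j // j ≠ i} → ℝ)) :=
    ⟨fun x => (π (a x), π (b x)), by fun_prop⟩
  set M := ‖insertZero i‖ + 1 with hM
  have hMpos : 0 < M := by positivity
  have hfr : Module.finrank ℝ V <
      Module.finrank ℝ (({j // j ≠ i} → ℝ) × ({j // j ≠ i} → ℝ)) := by
    simp only [Module.finrank_prod, Module.finrank_fintype_fun_eq_card, Fintype.card_subtype_compl,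
      Fintype.card_fin, ne_eq, Fintype.card_unique]
    omega
  obtain ⟨u', hu'⟩ := exists_perturbation_avoiding he hfr u
    ((hP.image π).prod (hQ.image π)) (ε := min ε₁ ε₂ / M) (by positivity)
  -- the cutoff: the perturbation is only needed where `a` and `b` differ by a fixed amount
  let N : Set X := {x | ∃ p ∈ P, ∃ q ∈ Q, p i ≤ a x i ∧ b x i ≤ q i}
  have hNc : IsClosed N := by
    have : N = ⋃ p ∈ P, ⋃ q ∈ Q, {x | p i ≤ a x i ∧ b x i ≤ q i} := by
      ext x; simp only [N, Set.mem_ofPred_eq, Set.mem_iUnion, exists_prop]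
    rw [this]
    refine hP.isClosed_biUnion fun p _ => hQ.isClosed_biUnion fun q _ => ?_
    exact (isClosed_le continuous_const (by fun_prop : Continuous fun x => a x i)).inter
      (isClosed_le (by fun_prop : Continuous fun x => b x i) continuous_const)
  obtain ⟨η, hη0, hη1, hη⟩ := exists_continuous_zero_one_of_isClosed hA hNc (by
    refine Set.disjoint_left.2 fun x hx ⟨p, hp, q, hq, h, h'⟩ => ?_
    rw [hab x hx] at h
    linarith [hPQ p hp q hq])
  have key : ∀ x (z : {j // j ≠ i} → ℝ), ‖z‖ < min ε₁ ε₂ / M →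
      ‖η x • insertZero i z‖ < min ε₁ ε₂ := by
    intro x z hz
    rw [norm_smul, Real.norm_of_nonneg (hη x).1]
    calc η x * ‖insertZero i z‖ ≤ 1 * ‖insertZero i z‖ := by gcongr; exact (hη x).2
      _ ≤ ‖insertZero i‖ * ‖z‖ := by rw [one_mul]; exact (insertZero i).le_opNorm z
      _ ≤ M * ‖z‖ := by gcongr; linarith
      _ < M * (min ε₁ ε₂ / M) := by gcongr
      _ = min ε₁ ε₂ := by field_simp
  have hz₁ : ∀ x, ‖(u' x).1 - π (a x)‖ < min ε₁ ε₂ / M := fun x =>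
    lt_of_le_of_lt (norm_fst_le (u' x - u x)) (hu' x).1
  have hz₂ : ∀ x, ‖(u' x).2 - π (b x)‖ < min ε₁ ε₂ / M := fun x =>
    lt_of_le_of_lt (norm_snd_le (u' x - u x)) (hu' x).1
  refine ⟨⟨fun x => a x + η x • insertZero i ((u' x).1 - π (a x)), by fun_prop⟩,
    ⟨fun x => b x + η x • insertZero i ((u' x).2 - π (b x)), by fun_prop⟩,
    fun x hx => ?_, fun x hx => ?_, fun x => ?_, fun x => ?_, ?_⟩
  · simp [hη0 hx]
  · simp [hη0 hx, hab x hx]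
  · refine h₁ x _ ?_
    simpa using (key x _ (hz₁ x)).trans_le (min_le_left _ _)
  · refine h₂ x _ ?_
    simpa using (key x _ (hz₂ x)).trans_le (min_le_right _ _)
  · intro x p hp q hq hap hpi hbq
    simp only [ContinuousMap.coe_mk, PiLp.add_apply, PiLp.smul_apply, insertZero_apply_self,
      smul_zero, add_zero] at hpi ⊢
    by_contra! hqi
    have hx1 : η x = 1 := hη1 ⟨p, hp, q, hq, hpi, hqi⟩
    refine (hu' x).2 ⟨⟨p, hp, ?_⟩, ⟨q, hq, ?_⟩⟩
    · funext j
      have := hap j j.2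
      simp only [ContinuousMap.coe_mk, PiLp.add_apply, hx1, one_smul,
        insertZero_apply_of_ne i _ j.2, Pi.sub_apply, π] at this
      simp only [π]; linarith
    · funext j
      have := hbq j j.2
      simp only [ContinuousMap.coe_mk, PiLp.add_apply, hx1, one_smul,
        insertZero_apply_of_ne i _ j.2, Pi.sub_apply, π] at this
      simp only [π]; linarith

/-- If `a` avoids `P`, `b` avoids `Q`, the ray preimages of `P` under `a` and `Q` under `b` are
disjoint, and `a = b` on `A`, then the common restriction to `A` extends to a map avoiding
`P ∪ Q`. -/
lemma exists_extension_of_disjoint_rays {X : Type*} [TopologicalSpace X] [CompactSpace X]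
    [T2Space X] {k : ℕ} {A : Set X} (hA : IsClosed A) (a b : C(X, Euc k))
    (hab : ∀ x ∈ A, b x = a x) {P Q : Set (Euc k)} (hP : P.Finite) (hQ : Q.Finite) (i : Fin k)
    {c δ : ℝ} (hδ : 0 < δ) (hPc : ∀ p ∈ P, c + δ ≤ p i) (hQc : ∀ q ∈ Q, q i ≤ c - δ)
    (ha : ∀ x, a x ∉ P) (hb : ∀ x, b x ∉ Q)
    (hray : ∀ x, ∀ p ∈ P, ∀ q ∈ Q, (∀ j ≠ i, a x j = p j) → p i ≤ a x i →
        (∀ j ≠ i, b x j = q j) → q i < b x i) :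
    ∃ G : C(X, Euc k), (∀ x ∈ A, G x = a x) ∧ ∀ x, G x ∉ P ∪ Q := by
  let KA : Set X := ⋃ p ∈ P, {x | (∀ j ≠ i, a x j = p j) ∧ p i ≤ a x i}
  let KB : Set X := ⋃ q ∈ Q, {x | (∀ j ≠ i, b x j = q j) ∧ b x i ≤ q i}
  have hac : ∀ j, Continuous fun x => a x j := fun j => by fun_prop
  have hbc : ∀ j, Continuous fun x => b x j := fun j => by fun_prop
  have hKA : IsClosed KA := hP.isClosed_biUnion fun p _ => by
    simp only [Set.ofPred_and, Set.ofPred_forall]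
    exact (isClosed_iInter fun j => isClosed_iInter fun _ =>
      isClosed_eq (hac j) continuous_const).inter (isClosed_le continuous_const (hac i))
  have hKB : IsClosed KB := hQ.isClosed_biUnion fun p _ => by
    simp only [Set.ofPred_and, Set.ofPred_forall]
    exact (isClosed_iInter fun j => isClosed_iInter fun _ =>
      isClosed_eq (hbc j) continuous_const).inter (isClosed_le (hbc i) continuous_const)
  have hdisj : Disjoint KA KB := by
    refine Set.disjoint_left.2 fun x hx hx' => ?_
    simp only [KA, KB, Set.mem_iUnion, Set.mem_ofPred_eq, exists_prop] at hx hx'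
    obtain ⟨p, hp, hp1, hp2⟩ := hx
    obtain ⟨q, hq, hq1, hq2⟩ := hx'
    linarith [hray x p hp q hq hp1 hp2 hq1]
  obtain ⟨u, hu0, hu1, hu⟩ := exists_continuous_zero_one_of_isClosed hKA hKB hdisj
  have hu0' : ∀ x, ∀ p ∈ P, (∀ j ≠ i, a x j = p j) → p i ≤ a x i → u x = 0 :=
    fun x p hp h h' => hu0 (Set.mem_biUnion hp ⟨h, h'⟩)
  have hu1' : ∀ x, ∀ q ∈ Q, (∀ j ≠ i, b x j = q j) → b x i ≤ q i → u x = 1 :=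
    fun x p hp h h' => hu1 (Set.mem_biUnion hp ⟨h, h'⟩)
  obtain ⟨Ma, hMa⟩ := (isCompact_range (hac i)).bddAbove
  obtain ⟨Mb, hMb⟩ := (isCompact_range (hbc i)).bddBelow
  obtain ⟨M, hM0, hM1, hM2⟩ : ∃ M : ℝ, 0 ≤ M ∧ (∀ x, a x i - c ≤ M) ∧ (∀ x, c - b x i ≤ M) := by
    refine ⟨max 0 (max (Ma - c) (c - Mb)), le_max_left _ _, fun x => ?_, fun x => ?_⟩
    · have := hMa ⟨x, rfl⟩
      exact le_max_of_le_right (le_max_of_le_left (sub_le_sub_right this c))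
    · have := hMb ⟨x, rfl⟩
      exact le_max_of_le_right (le_max_of_le_right (sub_le_sub_left this c))
  let α : X → ℝ := fun x => max (a x i - M * min 1 (2 * u x) - c) 0
  let β : X → ℝ := fun x => min (b x i + M * min 1 (2 - 2 * u x) - c) 0
  let φ : X → ℝ := fun x => max 0 (min 1 (1 / 2 - (α x + β x) / δ))
  have hα0 : ∀ x, 0 ≤ α x := fun x => le_max_right _ _
  have hβ0 : ∀ x, β x ≤ 0 := fun x => min_le_right _ _
  have hmA : ∀ x, 0 ≤ M * min 1 (2 * u x) := fun x =>
    mul_nonneg hM0 (le_min zero_le_one (by linarith [(hu x).1]))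
  have hmB : ∀ x, 0 ≤ M * min 1 (2 - 2 * u x) := fun x =>
    mul_nonneg hM0 (le_min zero_le_one (by linarith [(hu x).2]))
  have hαu : ∀ x, 1 / 2 ≤ u x → α x = 0 := by
    intro x hx
    have : min 1 (2 * u x) = 1 := min_eq_left (by linarith)
    simp only [α, this]
    exact max_eq_right (by linarith [hM1 x])
  have hβu : ∀ x, u x ≤ 1 / 2 → β x = 0 := by
    intro x hx
    have : min 1 (2 - 2 * u x) = 1 := min_eq_left (by linarith)
    simp only [β, this]
    exact min_eq_right (by linarith [hM2 x])
  let C : C(X, Euc k) := ⟨fun x => WithLp.toLp 2 fun j =>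
    if j = i then c + α x + β x else a x j + φ x * (b x j - a x j), by
      refine (PiLp.continuous_toLp 2 _).comp (continuous_pi fun j => ?_)
      split_ifs <;> fun_prop⟩
  have hCi : ∀ x, C x i = c + α x + β x := fun x => by simp [C]
  have hCj : ∀ x, ∀ j ≠ i, C x j = a x j + φ x * (b x j - a x j) := fun x j hj => by simp [C, hj]
  have hC : ∀ x, C x ∉ P ∪ Q := by
    rintro x (hx | hx)
    · have h1 := hPc _ hx
      rw [hCi] at h1
      have hαδ : δ ≤ α x := by linarith [hβ0 x]
      have hux : u x ≤ 1 / 2 := by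
        by_contra! h
        linarith [hαu x h.le]
      have hβ := hβu x hux
      have hφ : φ x = 0 := by
        refine max_eq_left ((min_le_right _ _).trans ?_)
        have : 1 ≤ (α x + β x) / δ := by rw [le_div_iff₀ hδ]; linarith
        linarith
      have hj : ∀ j ≠ i, a x j = C x j := fun j hj => by rw [hCj x j hj, hφ]; ring
      have hαe : α x = a x i - M * min 1 (2 * u x) - c := by
        refine max_eq_left ?_
        by_contra! h
        have : α x = 0 := max_eq_right h.le
        linarith
      have hi : C x i ≤ a x i := by rw [hCi]; linarith [hmA x]
      have hu := hu0' x _ hx hj hi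
      refine ha x ?_
      convert hx using 1
      ext j
      by_cases h : j = i
      · subst h
        rw [hCi, hαe, hu, hβ]; simp
      · exact hj j h
    · have h1 := hQc _ hx
      rw [hCi] at h1
      have hβδ : β x ≤ -δ := by linarith [hα0 x]
      have hux : 1 / 2 ≤ u x := by
        by_contra! h
        linarith [hβu x h.le]
      have hα := hαu x hux
      have hφ : φ x = 1 := by
        have : (α x + β x) / δ ≤ -1 := by rw [div_le_iff₀ hδ]; linarith
        simp only [φ]
        rw [min_eq_left (by linarith), max_eq_right zero_le_one]
      have hj : ∀ j ≠ i, b x j = C x j := fun j hj => by rw [hCj x j hj, hφ]; ring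
      have hβe : β x = b x i + M * min 1 (2 - 2 * u x) - c := by
        refine min_eq_left ?_
        by_contra! h
        have : β x = 0 := min_eq_right h.le
        linarith
      have hi : b x i ≤ C x i := by rw [hCi]; linarith [hmB x]
      have hu := hu1' x _ hx hj hi
      refine hb x ?_
      convert hx using 1
      ext j
      by_cases h : j = i
      · subst h
        rw [hCi, hβe, hu, hα]; simp
      · exact hj j h
  -- on `A`, the map `C` is joined to `a` by a homotopy moving only the `i`-th coordinate
  let h : C(A × unitInterval, Euc k) :=
    ⟨fun z => C z.1 + (z.2 : ℝ) • (a z.1 - C z.1), by fun_prop⟩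
  have hhi : ∀ z, h z i = (1 - (z.2 : ℝ)) * C z.1 i + (z.2 : ℝ) * a z.1 i := fun z => by
    simp [h]; ring
  have hhj : ∀ z, ∀ j ≠ i, h z j = a z.1 j := fun z j hj => by
    simp [h, hCj _ j hj, hab _ z.1.2]
  have hh : ∀ z, h z ∈ (P ∪ Q)ᶜ := by
    rintro ⟨⟨x, hxA⟩, t⟩ (hz | hz)
    · have hj : ∀ j ≠ i, a x j = h (⟨x, hxA⟩, t) j := fun j hj => by
        rw [hhj _ j hj]
      have hc := hPc _ hz
      have hi := hhi (⟨x, hxA⟩, t)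
      have ht0 := t.2.1
      have ht1 := t.2.2
      simp only at hi
      rcases le_or_gt (h (⟨x, hxA⟩, t) i) (a x i) with hle | hlt
      · have hu := hu0' x _ hz hj hle
        have hβ := hβu x (by linarith)
        have hα : α x = a x i - c := by
          simp only [α, hu]
          rw [max_eq_left] <;> simp
          linarith
        refine ha x ?_
        convert hz using 1
        ext j
        by_cases h' : j = i
        · subst h'
          rw [hi, hCi, hα, hβ]; ring
        · exact hj j h'
      · have : C x i < h (⟨x, hxA⟩, t) i := by
          rw [hCi]
          have : α x ≤ max (a x i - c) 0 := max_le_max (by linarith [hmA x]) le_rfl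
          rcases max_cases (a x i - c) 0 with h | h <;> linarith [hβ0 x]
        have := convex_Iio (𝕜 := ℝ) _ (Set.mem_Iio.2 this) (Set.mem_Iio.2 hlt) (sub_nonneg.2 ht1)
          ht0 (by ring)
        simp only [smul_eq_mul, ← hi, Set.mem_Iio, lt_irrefl] at this
    · have hj : ∀ j ≠ i, b x j = h (⟨x, hxA⟩, t) j := fun j hj => by
        rw [hhj _ j hj, hab x hxA]
      have hc := hQc _ hz
      have hi := hhi (⟨x, hxA⟩, t)
      have ht0 := t.2.1
      have ht1 := t.2.2
      simp only at hi
      rw [← hab x hxA] at hi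
      rcases le_or_gt (b x i) (h (⟨x, hxA⟩, t) i) with hle | hlt
      · have hu := hu1' x _ hz hj hle
        have hα := hαu x (by linarith)
        have hβ : β x = b x i - c := by
          simp only [β, hu]
          rw [min_eq_left] <;> simp
          linarith
        refine hb x ?_
        convert hz using 1
        ext j
        by_cases h' : j = i
        · subst h'
          rw [hi, hCi, hα, hβ]; ring
        · exact hj j h'
      · have : h (⟨x, hxA⟩, t) i < C x i := by
          rw [hCi]
          have : min (b x i - c) 0 ≤ β x := min_le_min (by linarith [hmB x]) le_rfl
          rcases min_cases (b x i - c) 0 with h | h <;> linarith [hα0 x]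
        have := convex_Ioi (𝕜 := ℝ) _ (Set.mem_Ioi.2 this) (Set.mem_Ioi.2 hlt) (sub_nonneg.2 ht1)
          ht0 (by ring)
        simp only [smul_eq_mul, ← hi, Set.mem_Ioi, lt_irrefl] at this
  obtain ⟨G, hG, hGA⟩ := exists_extension_of_homotopy hA (hP.union hQ).isClosed.isOpen_compl
    h hh C hC (fun a => by simp [h])
  exact ⟨G, fun x hx => by rw [hGA ⟨x, hx⟩]; simp [h], hG⟩

/-- A map defined on a closed subset `A` of an at most `k`-dimensional compact space, `k ≥ 3`, which
extends to a map avoiding `p` for each `p` in a finite set `P`, extends to a map avoiding `P`. -/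
lemma exists_extension_avoiding_finset {X : Type*} [TopologicalSpace X] [CompactSpace X]
    [T2Space X] {V : Type*} [NormedAddCommGroup V] [NormedSpace ℝ V] [FiniteDimensional ℝ V]
    {e : X → V} (he : Topology.IsClosedEmbedding e) {k : ℕ}
    (hV : Module.finrank ℝ V < 2 * (k - 1)) {A : Set X} (hA : IsClosed A)
    (f : C(X, Euc k)) (P : Finset (Euc k))
    (hP : ∀ p ∈ P, ∃ G : C(X, Euc k), (∀ x ∈ A, G x = f x) ∧ ∀ x, G x ≠ p) :
    ∃ G : C(X, Euc k), (∀ x ∈ A, G x = f x) ∧ ∀ x, G x ∉ P := by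
  induction P using Finset.strongInduction with
  | H P ih =>
  rcases P.eq_empty_or_nonempty with rfl | hne
  · exact ⟨f, fun _ _ => rfl, by simp⟩
  rcases hne.exists_eq_singleton_or_nontrivial with ⟨p, rfl⟩ | hnt
  · simpa using hP p (by simp)
  obtain ⟨p, hp, q, hq, hpq⟩ := hnt
  obtain ⟨i, hi⟩ : ∃ i, p i ≠ q i := by
    by_contra! h
    exact hpq (PiLp.ext h)
  wlog hlt : q i < p i generalizing p q
  · exact this q hq p hp hpq.symm hi.symm (lt_of_le_of_ne (not_lt.1 hlt) hi)
  obtain ⟨c, ⟨hc1, hc2⟩, hcP⟩ := ((Set.Ioo_infinite hlt).sdiff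
    (P.finite_toSet.image fun p : Euc k => p i)).nonempty
  have hcP' : ∀ r ∈ P, r i ≠ c := fun r hr h => hcP ⟨r, hr, h⟩
  obtain ⟨δ, hδ, hδP⟩ : ∃ δ > 0, ∀ r ∈ P, δ ≤ |r i - c| := by
    obtain ⟨r, hr, hmin⟩ := P.exists_min_image (fun r => |r i - c|) ⟨p, hp⟩
    exact ⟨|r i - c|, abs_pos.2 (sub_ne_zero.2 (hcP' r hr)), hmin⟩
  obtain ⟨a, haA, ha⟩ := ih (P.filter fun r => c < r i)
    (Finset.filter_ssubset.2 ⟨q, hq, by linarith⟩) fun r hr => hP r (Finset.mem_filter.1 hr).1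
  obtain ⟨b, hbA, hb⟩ := ih (P.filter fun r => r i < c)
    (Finset.filter_ssubset.2 ⟨p, hp, by linarith⟩) fun r hr => hP r (Finset.mem_filter.1 hr).1
  obtain ⟨a', b', ha'A, hb'A, ha', hb', hray⟩ := exists_perturbation_disjoint_rays he hV hA a b
    (fun x hx => by rw [haA x hx, hbA x hx]) (Finset.finite_toSet _) (Finset.finite_toSet _) i
    (fun r hr s hs => by
      simp only [Finset.coe_filter, Set.mem_ofPred_eq] at hr hs
      linarith [hr.2, hs.2]) ha hb
  obtain ⟨G, hGA, hG⟩ := exists_extension_of_disjoint_rays hA a' b'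
    (fun x hx => by rw [ha'A x hx, hb'A x hx]) (Finset.finite_toSet _) (Finset.finite_toSet _) i
    hδ (c := c)
    (fun r hr => by
      simp only [Finset.coe_filter, Set.mem_ofPred_eq] at hr
      have := hδP r hr.1
      rw [abs_of_pos (by linarith [hr.2])] at this
      linarith)
    (fun r hr => by
      simp only [Finset.coe_filter, Set.mem_ofPred_eq] at hr
      have := hδP r hr.1
      rw [abs_of_neg (by linarith [hr.2])] at this
      linarith) ha' hb' hray
  refine ⟨G, fun x hx => by rw [hGA x hx, ha'A x hx, haA x hx], fun x hx => hG x ?_⟩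
  rcases lt_or_gt_of_ne (hcP' _ hx) with h | h
  · exact Or.inr (by simpa using ⟨hx, h⟩)
  · exact Or.inl (by simpa using ⟨hx, h⟩)

/-- **Sard's lemma** for maps into a space of at least the same dimension: the values at points with
non-injective derivative form a null set. -/
lemma addHaar_image_not_injective_fderiv_eq_zero {Y Z : Type*}
    [NormedAddCommGroup Y] [NormedSpace ℝ Y] [FiniteDimensional ℝ Y]
    [NormedAddCommGroup Z] [NormedSpace ℝ Z] [FiniteDimensional ℝ Z]
    [MeasurableSpace Z] [BorelSpace Z] (μ : MeasureTheory.Measure Z) [μ.IsAddHaarMeasure]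
    (hYZ : Module.finrank ℝ Y ≤ Module.finrank ℝ Z) {F : Y → Z} (hF : Differentiable ℝ F) :
    μ (F '' {y | ¬ Function.Injective (fderiv ℝ F y)}) = 0 := by
  obtain ⟨J, hJ⟩ : ∃ J : Y →ₗ[ℝ] Z, Function.Injective J := by
    exact finrank_le_iff_exists_linearMap.mp hYZ
  obtain ⟨L₀, hL₀⟩ := J.exists_leftInverse_of_injective (LinearMap.ker_eq_bot.2 hJ)
  let L : Z →L[ℝ] Y := LinearMap.toContinuousLinearMap L₀
  have hL : Function.Surjective L := fun y => ⟨J y, DFunLike.congr_fun hL₀ y⟩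
  refine MeasureTheory.measure_mono_null (t := (F ∘ L) '' {z | (fderiv ℝ (F ∘ L) z).det = 0}) ?_
    (MeasureTheory.addHaar_image_eq_zero_of_det_fderivWithin_eq_zero μ
      (fun z _ => ((hF.comp L.differentiable) z).hasFDerivAt.hasFDerivWithinAt) fun z hz => hz)
  rintro _ ⟨y, hy, rfl⟩
  obtain ⟨z, rfl⟩ := hL y
  refine ⟨z, ?_, rfl⟩
  have hc : fderiv ℝ (F ∘ L) z = (fderiv ℝ F (L z)).comp L := by
    rw [fderiv_comp z (hF _) L.differentiableAt, L.fderiv]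
  rw [Set.mem_ofPred_eq, hc]
  by_contra hdet
  refine hy ((injective_iff_map_eq_zero _).2 fun y hy0 => ?_)
  obtain ⟨w, rfl⟩ := hL y
  have hu : IsUnit ((((fderiv ℝ F (L z)).comp L : Z →L[ℝ] Z) : Z →ₗ[ℝ] Z)) :=
    (LinearMap.isUnit_iff_isUnit_det _).2 (isUnit_iff_ne_zero.2 hdet)
  have hinj := ((Module.End.isUnit_iff _).1 hu).injective
  have : w = 0 := hinj (by simpa using hy0)
  simp [this]

/-- The parameters for which the zero of `Ψ (v, ·)` fails to be regular at some point of `K`. -/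
def irregularParams {V Y Z : Type*} [NormedAddCommGroup V] [NormedSpace ℝ V]
    [NormedAddCommGroup Y] [NormedSpace ℝ Y] [NormedAddCommGroup Z] [NormedSpace ℝ Z]
    (Ψ : V × Y → Z) (K : Set Y) : Set V :=
  {v | ∃ y ∈ K, Ψ (v, y) = 0 ∧ ¬ Function.Injective (fderiv ℝ (fun y => Ψ (v, y)) y)}

section Parametric

variable {V Y Z : Type*} [NormedAddCommGroup V] [NormedSpace ℝ V]
    [NormedAddCommGroup Y] [NormedSpace ℝ Y]
    [NormedAddCommGroup Z] [NormedSpace ℝ Z] {Ψ : V × Y → Z} {K : Set Y}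

lemma fderiv_section (hΨ : ContDiff ℝ 1 Ψ) (v : V) (y z : Y) :
    fderiv ℝ (fun y => Ψ (v, y)) y z = fderiv ℝ Ψ (v, y) (0, z) := by
  have h := ((hΨ.differentiable one_ne_zero) (v, y)).hasFDerivAt.comp y
    (hasFDerivAt_prodMk_right v y)
  have h' := h.fderiv
  simp only [Function.comp_def] at h'
  rw [h']
  simp

lemma isClosed_irregularParams [FiniteDimensional ℝ Y] (hΨ : ContDiff ℝ 1 Ψ) (hK : IsCompact K) :
    IsClosed (irregularParams Ψ K) := by
  let D := K ×ˢ Metric.sphere (0 : Y) 1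
  have : CompactSpace D := isCompact_iff_compactSpace.1 (hK.prod (isCompact_sphere _ _))
  have hc : IsClosed {w : V × D | Ψ (w.1, w.2.1.1) = 0 ∧
      fderiv ℝ Ψ (w.1, w.2.1.1) (0, w.2.1.2) = 0} := by
    have h1 := hΨ.continuous
    have h2 := hΨ.continuous_fderiv one_ne_zero
    refine (isClosed_eq (by fun_prop) continuous_const).inter
      (isClosed_eq (Continuous.clm_apply ?_ ?_) continuous_const)
    · exact h2.comp (by fun_prop)
    · fun_prop
  convert isClosedMap_fst_of_compactSpace _ hc using 1
  ext v
  constructor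
  · rintro ⟨y, hy, h0, hi⟩
    rw [injective_iff_map_eq_zero] at hi
    push Not at hi
    obtain ⟨z, hz, hz0⟩ := hi
    refine ⟨(v, ⟨(y, ‖z‖⁻¹ • z), hy, ?_⟩), ⟨h0, ?_⟩, rfl⟩
    · simp [norm_smul, hz0]
    · simp only
      rw [← fderiv_section hΨ, map_smul, hz, smul_zero]
  · rintro ⟨⟨v', ⟨⟨y, z⟩, hy, hz⟩⟩, ⟨h0, hd⟩, rfl⟩
    refine ⟨y, hy, h0, fun hi => ?_⟩
    simp only at hd hz
    rw [← fderiv_section hΨ] at hd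
    have : z = 0 := hi (by rw [hd, map_zero])
    simp [this] at hz

lemma interior_irregularParams [FiniteDimensional ℝ Y] [FiniteDimensional ℝ Z]
    (hΨ : ContDiff ℝ 1 Ψ)
    (hYZ : Module.finrank ℝ Y ≤ Module.finrank ℝ Z) (τ : Z → V) (hτ : Continuous τ)
    (hτ0 : τ 0 = 0) (hτΨ : ∀ v z y, Ψ (v + τ z, y) = Ψ (v, y) + z) :
    interior (irregularParams Ψ K) = ∅ := by
  borelize Z
  rw [Set.eq_empty_iff_forall_notMem]
  intro v hv
  let μ : MeasureTheory.Measure Z := MeasureTheory.Measure.addHaar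
  let F : Y → Z := fun y => Ψ (v, y)
  have hF : Differentiable ℝ F := (hΨ.differentiable one_ne_zero).comp (by fun_prop)
  have hnull := addHaar_image_not_injective_fderiv_eq_zero μ hYZ hF
  have hcont : Continuous fun z : Z => v + τ (-z) := by fun_prop
  have hopen := isOpen_interior.preimage hcont (t := interior (irregularParams Ψ K))
  refine (hopen.measure_pos μ ⟨0, by simpa [hτ0] using hv⟩).ne'
    (MeasureTheory.measure_mono_null ?_ hnull)
  intro z hz
  obtain ⟨y, -, h0, hi⟩ := interior_subset hz
  rw [hτΨ] at h0
  refine ⟨y, ?_, by simpa [F, ← sub_eq_add_neg, sub_eq_zero] using h0⟩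
  have : (fun y => Ψ (v + τ (-z), y)) = fun y => F y + -z := by
    funext y; exact hτΨ _ _ _
  rwa [this, fderiv_add_const] at hi

lemma finite_zeros_of_notMem_irregularParams [FiniteDimensional ℝ Y]
    (hΨ : ContDiff ℝ 1 Ψ) (hK : IsCompact K) {v : V}
    (hv : v ∉ irregularParams Ψ K) : {y ∈ K | Ψ (v, y) = 0}.Finite := by
  have hΨc := hΨ.continuous
  have hc : IsCompact {y ∈ K | Ψ (v, y) = 0} :=
    hK.inter_right (isClosed_eq (by fun_prop) continuous_const)
  refine hc.finite (isDiscrete_iff_nhdsNE.2 ?_)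
  rintro y ⟨hy, h0⟩
  have hinj : Function.Injective (fderiv ℝ (fun y => Ψ (v, y)) y) := by
    by_contra h
    exact hv ⟨y, hy, h0, h⟩
  obtain ⟨C, -, hC⟩ := LinearMap.exists_antilipschitzWith
    (fderiv ℝ (fun y => Ψ (v, y)) y : Y →ₗ[ℝ] Z) (LinearMap.ker_eq_bot.2 hinj)
  have hd : DifferentiableAt ℝ (fun y => Ψ (v, y)) y :=
    ((hΨ.differentiable one_ne_zero).comp (by fun_prop)) y
  have hne := hd.hasFDerivAt.eventually_ne (c := 0) ⟨C, hC⟩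
  rw [← disjoint_iff, Filter.disjoint_principal_right]
  filter_upwards [hne] with z hz hz' using hz hz'.2

end Parametric

lemma isCompact_stdSimp (N : ℕ) : IsCompact (stdSimp N) :=
  isCompact_stdSimplex ℝ (Fin (N + 1))

/-- The affine parametrization of the hull of `S` by the coordinates in `S` other than `c`. -/
def faceChart {N : ℕ} (S : Finset (Fin (N + 1))) (c : Fin (N + 1)) (w : Fin (N + 1) → ℝ) :
    Fin (N + 1) → ℝ :=
  fun j => if j = c then 1 - ∑ i ∈ S.erase c, w i else if j ∈ S then w j else 0

section FaceChart

variable {N : ℕ} {S : Finset (Fin (N + 1))} {c : Fin (N + 1)}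

lemma faceChart_of_notMem (hc : c ∈ S) (w : Fin (N + 1) → ℝ) {j : Fin (N + 1)} (hj : j ∉ S) :
    faceChart S c w j = 0 := by
  have : j ≠ c := fun h => hj (h ▸ hc)
  simp [faceChart, this, hj]

lemma sum_faceChart (hc : c ∈ S) (w : Fin (N + 1) → ℝ) : ∑ j, faceChart S c w j = 1 := by
  rw [← Finset.sum_subset S.subset_univ fun j _ hj => faceChart_of_notMem hc w hj,
    ← Finset.add_sum_erase S _ hc]
  have : ∑ j ∈ S.erase c, faceChart S c w j = ∑ j ∈ S.erase c, w j :=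
    Finset.sum_congr rfl fun j hj => by
      simp [faceChart, Finset.ne_of_mem_erase hj, Finset.mem_of_mem_erase hj]
  rw [this]
  simp [faceChart]

lemma faceChart_eq (hc : c ∈ S) {w x : Fin (N + 1) → ℝ} (hx : x ∈ simpFace S)
    (hw : ∀ j ∈ S.erase c, w j = x j) : faceChart S c w = x := by
  have hsum : ∑ j ∈ S, x j = 1 := by
    rw [Finset.sum_subset S.subset_univ fun j _ hj => hx.2 j hj, hx.1.2]
  rw [← Finset.add_sum_erase S _ hc] at hsum
  funext j
  by_cases hj : j = c
  · subst hj
    simp only [faceChart, if_true, Finset.sum_congr rfl hw]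
    linarith
  · by_cases hjS : j ∈ S
    · simp [faceChart, hj, hjS, hw j (Finset.mem_erase.2 ⟨hj, hjS⟩)]
    · simp [faceChart, hj, hjS, hx.2 j hjS]

lemma contDiff_faceChart : ContDiff ℝ 1 (faceChart S c) := by
  rw [contDiff_pi]
  intro j
  unfold faceChart
  split_ifs <;> fun_prop

end FaceChart

/-- For a `C¹` map `g`, the linear perturbations `x ↦ g x + ∑ j, x j • v j` for which the images of
the faces in `𝒮` meet in infinitely many points form a nowhere dense set. -/
lemma exists_nowhereDense_finite_iInter_image {N k : ℕ} {g : (Fin (N + 1) → ℝ) → Euc k}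
    (hg : ContDiff ℝ 1 g) {𝒮 : Finset (Finset (Fin (N + 1)))} (hne : ∀ S ∈ 𝒮, S.Nonempty)
    (hdisj : ∀ S ∈ 𝒮, ∀ T ∈ 𝒮, S ≠ T → Disjoint S T)
    (hcard : ∑ S ∈ 𝒮, S.card + k ≤ 𝒮.card * (k + 1)) (hk : 1 ≤ k) :
    ∃ B : Set (Fin (N + 1) → Euc k), IsClosed B ∧ interior B = ∅ ∧ ∀ v ∉ B, ‖v‖ ≤ 1 →
      (⋂ S ∈ 𝒮, (fun x : Fin (N + 1) → ℝ => g x + ∑ j, x j • v j) '' simpFace S).Finite := by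
  choose! c hc using hne
  let T : Finset (Fin (N + 1)) := 𝒮.biUnion fun S => S.erase (c S)
  let ext : (T → ℝ) → Fin (N + 1) → ℝ := fun y j => if h : j ∈ T then y ⟨j, h⟩ else 0
  have hext : ContDiff ℝ 1 ext := by
    rw [contDiff_pi]
    intro j
    by_cases h : j ∈ T
    · simp only [ext, h, dite_true]; fun_prop
    · simp only [ext, h, dite_false]; fun_prop
  let Φ : (Fin (N + 1) → Euc k) × (Fin (N + 1) → ℝ) → Euc k := fun a => g a.2 + ∑ j, a.2 j • a.1 j
  have hΦ : ContDiff ℝ 1 Φ := by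
    refine (hg.comp contDiff_snd).add (ContDiff.sum fun j _ => ?_)
    fun_prop
  let Ψ : (Fin (N + 1) → Euc k) × ((T → ℝ) × Euc k) → (𝒮 → Euc k) :=
    fun a S => Φ (a.1, faceChart S.1 (c S) (ext a.2.1)) - a.2.2
  have hΨ : ContDiff ℝ 1 Ψ := by
    rw [contDiff_pi]
    intro S
    refine (hΦ.comp (contDiff_fst.prodMk ?_)).sub (by fun_prop)
    exact contDiff_faceChart.comp (hext.comp (by fun_prop))
  let K : Set ((T → ℝ) × Euc k) :=
    Set.Icc 0 1 ×ˢ (Φ '' (Metric.closedBall 0 1 ×ˢ stdSimp N))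
  have hK : IsCompact K := isCompact_Icc.prod
    (((isCompact_closedBall _ _).prod (isCompact_stdSimp N)).image hΦ.continuous)
  let τ : (𝒮 → Euc k) → Fin (N + 1) → Euc k :=
    fun z j => ∑ S : 𝒮, if j ∈ S.1 then z S else 0
  have hτ : Continuous τ := by
    refine continuous_pi fun j => continuous_finsetSum _ fun S _ => ?_
    split_ifs <;> fun_prop
  have huniq : ∀ (S T : 𝒮) (j : Fin (N + 1)), j ∈ S.1 → j ∈ T.1 → T = S := by
    intro S T j hS hT
    by_contra h
    exact Finset.disjoint_left.1 (hdisj T.1 T.2 S.1 S.2 fun h' => h (Subtype.ext h')) hT hS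
  have hτΨ : ∀ v z y, Ψ (v + τ z, y) = Ψ (v, y) + z := by
    intro v z y
    funext S
    have h : ∑ j, faceChart S.1 (c S) (ext y.1) j • τ z j = z S := by
      have : ∀ j, faceChart S.1 (c S) (ext y.1) j • τ z j =
          faceChart S.1 (c S) (ext y.1) j • z S := by
        intro j
        by_cases hj : j ∈ S.1
        · congr 1
          simp only [τ]
          rw [Finset.sum_eq_single S]
          · simp [hj]
          · intro T _ hT
            rw [if_neg fun hjT => hT (huniq S T j hj hjT)]
          · simp
        · rw [faceChart_of_notMem (hc _ S.2) _ hj, zero_smul, zero_smul]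
      rw [Finset.sum_congr rfl fun j _ => this j, ← Finset.sum_smul, sum_faceChart (hc _ S.2),
        one_smul]
    simp only [Ψ, Φ, Pi.add_apply, smul_add, Finset.sum_add_distrib, h]
    abel
  have hfin : Module.finrank ℝ ((T → ℝ) × Euc k) ≤ Module.finrank ℝ (𝒮 → Euc k) := by
    have hT : T.card ≤ ∑ S ∈ 𝒮, (S.card - 1) :=
      Finset.card_biUnion_le.trans (Finset.sum_le_sum fun S hS =>
        (Finset.card_erase_of_mem (hc S hS)).le)
    have hsum : ∑ S ∈ 𝒮, (S.card - 1) + 𝒮.card = ∑ S ∈ 𝒮, S.card := by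
      rw [Finset.card_eq_sum_ones, ← Finset.sum_add_distrib]
      exact Finset.sum_congr rfl fun S hS => Nat.sub_add_cancel (Finset.card_pos.2 ⟨_, hc S hS⟩)
    simp only [Module.finrank_prod, Module.finrank_fintype_fun_eq_card, Fintype.card_coe,
      Module.finrank_pi_fintype, finrank_euclideanSpace, Fintype.card_fin, Finset.sum_const,
      Finset.card_univ, smul_eq_mul]
    rw [mul_add] at hcard
    omega
  refine ⟨irregularParams Ψ K, isClosed_irregularParams hΨ hK,
    interior_irregularParams hΨ hfin τ hτ (by funext j; simp [τ]) hτΨ, fun v hv hv1 => ?_⟩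
  refine ((finite_zeros_of_notMem_irregularParams hΨ hK hv).image Prod.snd).subset ?_
  intro p hp
  simp only [Set.mem_iInter] at hp
  choose! x hx hxp using hp
  have h𝒮 : 𝒮.Nonempty := by
    rw [Finset.nonempty_iff_ne_empty]
    rintro rfl
    simp at hcard
    omega
  obtain ⟨S₀, hS₀⟩ := h𝒮
  let w : Fin (N + 1) → ℝ := fun j => ∑ S : 𝒮, x S j
  have hw : ∀ S : 𝒮, ∀ j ∈ S.1, w j = x S j := by
    intro S j hj
    simp only [w]
    refine Finset.sum_eq_single S (fun T _ hT => ?_) (by simp)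
    exact (hx T.1 T.2).2 j fun hjT => hT (huniq S T j hj hjT)
  have hewx : ∀ S : 𝒮, faceChart S.1 (c S) (ext fun j => w j) = x S := by
    intro S
    refine faceChart_eq (hc _ S.2) (hx _ S.2) fun j hj => ?_
    have hjT : j ∈ T := Finset.mem_biUnion.2 ⟨S, S.2, hj⟩
    simp only [ext, hjT, dite_true]
    exact hw S j (Finset.mem_of_mem_erase hj)
  refine ⟨(fun j => w j, p), ⟨⟨?_, ?_⟩, ?_⟩, rfl⟩
  · have : ∀ j : T, ∃ S : 𝒮, j.1 ∈ S.1 := fun j => by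
      obtain ⟨S, hS, hj⟩ := Finset.mem_biUnion.1 j.2
      exact ⟨⟨S, hS⟩, Finset.mem_of_mem_erase hj⟩
    constructor <;> intro j <;> obtain ⟨S, hS⟩ := this j
    · simp only [hw S j hS]
      exact (hx _ S.2).1.1 j
    · simp only [hw S j hS, Pi.one_apply]
      rw [← (hx _ S.2).1.2]
      exact Finset.single_le_sum (fun i _ => (hx _ S.2).1.1 i) (Finset.mem_univ _)
  · exact ⟨(v, x S₀), ⟨by simpa using hv1, (hx S₀ hS₀).1⟩, hxp S₀ hS₀⟩
  · funext S
    simp only [Ψ, hewx, Pi.zero_apply, sub_eq_zero]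
    exact hxp S S.2

/-- The sets of vertex subsets whose faces have images meeting, generically, in finitely many
points of `ℝ^k`. -/
def IsFiniteMeeting (k : ℕ) {N : ℕ} (𝒮 : Finset (Finset (Fin (N + 1)))) : Prop :=
  (∀ S ∈ 𝒮, S.Nonempty) ∧ (∀ S ∈ 𝒮, ∀ T ∈ 𝒮, S ≠ T → Disjoint S T) ∧
    ∑ S ∈ 𝒮, S.card + k ≤ 𝒮.card * (k + 1)

lemma exists_approx_finite_iInter_image {N k : ℕ} (hk : 1 ≤ k) (f : C(Fin (N + 1) → ℝ, Euc k))
    {ε : ℝ} (hε : 0 < ε) :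
    ∃ F : C(Fin (N + 1) → ℝ, Euc k), (∀ x ∈ stdSimp N, ‖F x - f x‖ < ε) ∧
      ∀ 𝒮 : Finset (Finset (Fin (N + 1))), IsFiniteMeeting k 𝒮 →
        (⋂ S ∈ 𝒮, F '' simpFace S).Finite := by
  obtain ⟨g, hg, hgf, -⟩ := f.continuous.exists_contDiff_approx 1
    (continuous_const (y := ε / 2)) fun _ => half_pos hε
  replace hg : ContDiff ℝ 1 g := hg
  have h : ∀ 𝒮 : {𝒮 : Finset (Finset (Fin (N + 1))) // IsFiniteMeeting k 𝒮},
      ∃ B : Set (Fin (N + 1) → Euc k), IsClosed B ∧ interior B = ∅ ∧ ∀ v ∉ B, ‖v‖ ≤ 1 →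
      (⋂ S ∈ 𝒮.1, (fun x : Fin (N + 1) → ℝ => g x + ∑ j, x j • v j) '' simpFace S).Finite :=
    fun 𝒮 => exists_nowhereDense_finite_iInter_image hg 𝒮.2.1 𝒮.2.2.1 𝒮.2.2.2 hk
  choose B hBc hBi hB using h
  have hdense : Dense (⋂ 𝒮, (B 𝒮)ᶜ) :=
    dense_iInter_of_isOpen (fun 𝒮 => (hBc 𝒮).isOpen_compl)
      fun 𝒮 => interior_eq_empty_iff_dense_compl.1 (hBi 𝒮)
  obtain ⟨v, hv, hvB⟩ := hdense.exists_mem_open Metric.isOpen_ball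
    ⟨0, Metric.mem_ball_self (lt_min one_pos (half_pos hε))⟩
  rw [mem_ball_zero_iff, lt_min_iff] at hvB
  rw [Set.mem_iInter] at hv
  refine ⟨⟨fun x => g x + ∑ j, x j • v j, ?_⟩, fun x hx => ?_, fun 𝒮 h𝒮 =>
    hB ⟨𝒮, h𝒮⟩ v (hv _) hvB.1.le⟩
  · have := hg.continuous
    fun_prop
  · have h1 := hgf x
    rw [dist_eq_norm] at h1
    have h2 : ‖∑ j, x j • v j‖ ≤ ‖v‖ := by
      refine (norm_sum_le _ _).trans ?_
      calc ∑ j, ‖x j • v j‖ ≤ ∑ j, x j * ‖v‖ := Finset.sum_le_sum fun j _ => by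
            rw [norm_smul, Real.norm_of_nonneg (hx.1 j)]
            exact mul_le_mul_of_nonneg_left (norm_le_pi_norm v j) (hx.1 j)
        _ = ‖v‖ := by rw [← Finset.sum_mul, hx.2, one_mul]
    calc ‖g x + ∑ j, x j • v j - f x‖ = ‖(g x - f x) + ∑ j, x j • v j‖ := by congr 1; abel
      _ ≤ ‖g x - f x‖ + ‖∑ j, x j • v j‖ := norm_add_le _ _
      _ < ε := by linarith [hvB.2]

section Faces

variable {N : ℕ} {S : Finset (Fin (N + 1))}

lemma isCompact_simpFace (S : Finset (Fin (N + 1))) : IsCompact (simpFace S) := by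
  refine (isCompact_stdSimp N).inter_right (t := {x | ∀ i ∉ S, x i = 0}) ?_
  simp only [Set.ofPred_forall]
  exact isClosed_iInter fun i => isClosed_iInter fun _ =>
    isClosed_eq (continuous_apply i) continuous_const

lemma isCompact_simpFaceBoundary (S : Finset (Fin (N + 1))) :
    IsCompact (simpFaceBoundary S) := by
  have : simpFaceBoundary S = simpFace S ∩ ⋃ i ∈ S, {x | x i = 0} := by
    ext x
    simp [simpFaceBoundary]
  rw [this]
  exact (isCompact_simpFace S).inter_right (isClosed_biUnion_finset fun i _ =>
    isClosed_eq (continuous_apply i) continuous_const)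

lemma support_subset_of_mem_simpFace {x : Fin (N + 1) → ℝ} (hx : x ∈ simpFace S) :
    ({i | x i ≠ 0} : Finset (Fin (N + 1))) ⊆ S := by
  intro i hi
  by_contra h
  exact (Finset.mem_filter.1 hi).2 (hx.2 i h)

lemma skel_eq_iUnion (N k : ℕ) :
    skel N k = ⋃ S : {S : Finset (Fin (N + 1)) // S.card ≤ k + 1}, simpFace S.1 := by
  ext x
  have h : {i | x i ≠ 0}.ncard = ({i | x i ≠ 0} : Finset (Fin (N + 1))).card := by
    rw [← Set.ncard_coe_finset]
    simp
  simp only [skel, Set.mem_iUnion, Subtype.exists, exists_prop]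
  constructor
  · rintro ⟨hx, hc⟩
    exact ⟨_, h ▸ hc, hx, fun i hi => by simpa using hi⟩
  · rintro ⟨S, hS, hx⟩
    exact ⟨hx.1, h ▸ (Finset.card_le_card (support_subset_of_mem_simpFace hx)).trans hS⟩

lemma simpFace_subset_skel {k : ℕ} (hS : S.card ≤ k + 1) : simpFace S ⊆ skel N k := by
  rw [skel_eq_iUnion]
  exact Set.subset_iUnion (fun S : {S : Finset (Fin (N + 1)) // S.card ≤ k + 1} => simpFace S.1)
    ⟨S, hS⟩

lemma simpFaceBoundary_subset_skel {k : ℕ} (hS : S.card ≤ k + 2) :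
    simpFaceBoundary S ⊆ skel N k := by
  rintro x ⟨hx, i, hi, hxi⟩
  refine simpFace_subset_skel (S := S.erase i) ?_ ⟨hx.1, fun j hj => ?_⟩
  · rw [Finset.card_erase_of_mem hi]
    omega
  · by_cases hji : j = i
    · rw [hji, hxi]
    · exact hx.2 j fun h => hj (Finset.mem_erase.2 ⟨hji, h⟩)

lemma isClosed_skel (N k : ℕ) : IsClosed (skel N k) := by
  rw [skel_eq_iUnion]
  exact isClosed_iUnion_of_finite fun S => (isCompact_simpFace S.1).isClosed

end Faces

/-- A map with trivial winding about every point of a finite set `P` on the boundary of a face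
extends over the face without meeting `P`. -/
lemma exists_extension_avoiding_of_not_inWne {N k : ℕ} (hk : 3 ≤ k) {S : Finset (Fin (N + 1))}
    (hS : S.card = k + 1) (F : C(Fin (N + 1) → ℝ, Euc k)) (P : Finset (Euc k))
    (hP : ∀ p ∈ P, ¬ InWne k F S p) :
    ∃ G : C(Fin (N + 1) → ℝ, Euc k), (∀ x ∈ simpFaceBoundary S, G x = F x) ∧
      ∀ x ∈ simpFace S, G x ∉ P := by
  obtain ⟨c, hc⟩ : S.Nonempty := Finset.card_pos.1 (by omega)
  have : CompactSpace (simpFace S) := isCompact_iff_compactSpace.1 (isCompact_simpFace S)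
  let e : simpFace S → (↥(S.erase c) → ℝ) := fun x j => x.1 j
  have he : Topology.IsClosedEmbedding e := by
    refine Continuous.isClosedEmbedding (continuous_pi fun j =>
      (continuous_apply j.1).comp continuous_subtype_val) fun x y hxy => Subtype.ext ?_
    rw [← faceChart_eq hc x.2 fun j _ => rfl]
    exact faceChart_eq hc y.2 fun j hj => congrFun hxy ⟨j, hj⟩
  have hfin : Module.finrank ℝ (↥(S.erase c) → ℝ) < 2 * (k - 1) := by
    rw [Module.finrank_fintype_fun_eq_card, Fintype.card_coe, Finset.card_erase_of_mem hc, hS]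
    omega
  let A : Set (simpFace S) := Subtype.val ⁻¹' simpFaceBoundary S
  have hA : IsClosed A := (isCompact_simpFaceBoundary S).isClosed.preimage continuous_subtype_val
  obtain ⟨G, hGA, hGP⟩ := exists_extension_avoiding_finset he hfin hA (F.restrict (simpFace S)) P
    (by
      intro p hp
      have hWne := hP p hp
      simp only [InWne, not_or, not_not] at hWne
      obtain ⟨-, g, y, hg, ⟨h⟩⟩ := hWne
      let ι : C(A, simpFaceBoundary S) := ⟨fun a => ⟨a.1.1, a.2⟩, by fun_prop⟩
      obtain ⟨G, hGU, hG⟩ := exists_extension_of_homotopy hA (U := {p}ᶜ) isOpen_compl_singleton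
        ⟨fun z : A × unitInterval => (h.symm (z.2, ι z.1)).1, by fun_prop⟩
        (fun z => (h.symm (z.2, ι z.1)).2) (ContinuousMap.const _ y.1) (fun _ => y.2)
        (fun a => by simp)
      refine ⟨G, fun x hx => ?_, hGU⟩
      rw [hG ⟨x, hx⟩]
      simp [ι, hg])
  obtain ⟨G', hG'⟩ := ContinuousMap.exists_restrict_eq (isCompact_simpFace S).isClosed G
  have hG'x : ∀ x (hx : x ∈ simpFace S), G' x = G ⟨x, hx⟩ := fun x hx => by
    rw [← hG']; rfl
  refine ⟨G', fun x hx => ?_, fun x hx => ?_⟩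
  · rw [hG'x x hx.1, hGA ⟨x, hx.1⟩ hx]; rfl
  · rw [hG'x x hx]
    exact hGP _

/-- Maps on the `k`-faces that agree with `F` on their boundaries glue to a map on the
`k`-skeleton that agrees with `F` on the `(k-1)`-skeleton. -/
lemma exists_continuousOn_skel {N k : ℕ} (F : C(Fin (N + 1) → ℝ, Euc k))
    (G : Finset (Fin (N + 1)) → C(Fin (N + 1) → ℝ, Euc k))
    (hG : ∀ S, S.card = k + 1 → ∀ x ∈ simpFaceBoundary S, G S x = F x) :
    ∃ g : (Fin (N + 1) → ℝ) → Euc k, ContinuousOn g (skel N k) ∧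
      (∀ S, S.card ≤ k → Set.EqOn g F (simpFace S)) ∧
      ∀ S, S.card = k + 1 → Set.EqOn g (G S) (simpFace S) := by
  let supp : (Fin (N + 1) → ℝ) → Finset (Fin (N + 1)) := fun x => {i | x i ≠ 0}
  let g : (Fin (N + 1) → ℝ) → Euc k := fun x => if (supp x).card = k + 1 then G (supp x) x else F x
  have hlow : ∀ S, S.card ≤ k → Set.EqOn g F (simpFace S) := fun S hS x hx => by
    have := Finset.card_le_card (support_subset_of_mem_simpFace hx)
    exact if_neg (by simp only [supp]; omega)
  have htop : ∀ S, S.card = k + 1 → Set.EqOn g (G S) (simpFace S) := fun S hS x hx => by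
    have hsub : supp x ⊆ S := support_subset_of_mem_simpFace hx
    by_cases h : (supp x).card = k + 1
    · simp only [g, Finset.eq_of_subset_of_card_le hsub (by omega), hS, if_true]
    · have : ¬ S ⊆ supp x := fun h' => h (by rw [hsub.antisymm h', hS])
      obtain ⟨i, hi, hxi⟩ := Finset.not_subset.1 this
      simp only [g, h, if_false]
      exact (hG S hS x ⟨hx, i, hi, by simpa [supp] using hxi⟩).symm
  refine ⟨g, ?_, hlow, htop⟩
  rw [skel_eq_iUnion]
  refine (locallyFinite_of_finite _).continuousOn_iUnion
    (fun S => (isCompact_simpFace S.1).isClosed) fun S => ?_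
  rcases S.2.lt_or_eq with h | h
  · exact F.continuous.continuousOn.congr (hlow S (by omega))
  · exact (G S).continuous.continuousOn.congr (htop S h)

lemma isFiniteMeeting_filter_card_le {k q : ℕ} (hq : 1 ≤ q)
    {𝒬 : Finset (Finset (Fin ((k + 1) * (q - 1) + 1)))} (hcard : 𝒬.card = q)
    (hne : ∀ S ∈ 𝒬, S.Nonempty) (hdisj : ∀ S ∈ 𝒬, ∀ T ∈ 𝒬, S ≠ T → Disjoint S T)
    (hle : ∀ S ∈ 𝒬, S.card ≤ k + 1) : IsFiniteMeeting k (𝒬.filter (·.card ≤ k)) := by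
  refine ⟨fun S hS => hne S (Finset.mem_filter.1 hS).1, fun S hS T hT =>
    hdisj S (Finset.mem_filter.1 hS).1 T (Finset.mem_filter.1 hT).1, ?_⟩
  have htot : ∑ S ∈ 𝒬, S.card ≤ (k + 1) * (q - 1) + 1 := by
    have h := Finset.card_biUnion (s := 𝒬) (t := id) hdisj
    simp only [id] at h
    rw [← h]
    exact (Finset.card_le_univ _).trans (by simp)
  have hrest : ∑ S ∈ 𝒬 with ¬ S.card ≤ k, S.card = (𝒬.filter (¬ ·.card ≤ k)).card * (k + 1) :=
    Finset.sum_const_nat fun S hS => by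
      have := hle S (Finset.mem_filter.1 hS).1
      have := (Finset.mem_filter.1 hS).2
      omega
  have hsplit := Finset.card_filter_add_card_filter_not (s := 𝒬) (·.card ≤ k)
  rw [← Finset.sum_filter_add_sum_filter_not 𝒬 (·.card ≤ k), hrest] at htot
  obtain ⟨r, rfl⟩ : ∃ r, q = r + 1 := ⟨q - 1, by omega⟩
  rw [hcard] at hsplit
  simp only [Nat.add_sub_cancel] at htot
  nlinarith

lemma exists_isWindingPartition_of_finite {k q : ℕ} (hk : 3 ≤ k) (hq : 1 ≤ q)
    (H : ∀ g : (Fin ((k + 1) * (q - 1) + 1) → ℝ) → Euc k,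
      ContinuousOn g (skel ((k + 1) * (q - 1)) k) →
      ∃ P : Finset (Finset (Fin ((k + 1) * (q - 1) + 1))),
        IsTverbergPartition q g P ∧ ∀ S ∈ P, S.card ≤ k + 1)
    (F : C(Fin ((k + 1) * (q - 1) + 1) → ℝ, Euc k))
    (hF : ∀ 𝒮 : Finset (Finset (Fin ((k + 1) * (q - 1) + 1))), IsFiniteMeeting k 𝒮 →
      (⋂ S ∈ 𝒮, F '' simpFace S).Finite) :
    ∃ P : Finset (Finset (Fin ((k + 1) * (q - 1) + 1))), IsWindingPartition k q F P := by
  classical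
  have hfin : (⋃ 𝒮 : {𝒮 : Finset (Finset (Fin ((k + 1) * (q - 1) + 1))) // IsFiniteMeeting k 𝒮},
      ⋂ S ∈ 𝒮.1, F '' simpFace S).Finite := Set.finite_iUnion fun 𝒮 => hF 𝒮.1 𝒮.2
  have hext : ∀ S : Finset (Fin ((k + 1) * (q - 1) + 1)), S.card = k + 1 →
      ∃ G : C(Fin ((k + 1) * (q - 1) + 1) → ℝ, Euc k), (∀ x ∈ simpFaceBoundary S, G x = F x) ∧
        ∀ x ∈ simpFace S, G x ∉ hfin.toFinset.filter (¬ InWne k F S ·) := fun S hS =>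
    exists_extension_avoiding_of_not_inWne hk hS F _ fun p hp => (Finset.mem_filter.1 hp).2
  choose! G hGF hGP using hext
  obtain ⟨g, hg, hlow, htop⟩ := exists_continuousOn_skel F G hGF
  obtain ⟨𝒬, ⟨hcard, hne, hdisj, p, hp⟩, hle⟩ := H g hg
  rw [Set.mem_iInter₂] at hp
  have hpF : ∀ S ∈ 𝒬, S.card ≤ k → p ∈ F '' simpFace S := fun S hS hSk => by
    rw [← (hlow S hSk).image_eq]
    exact hp S hS
  refine ⟨𝒬, hcard, hne, hle, hdisj, p, fun S hS => ⟨hpF S hS, fun hSk => ?_⟩⟩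
  by_contra hW
  have hpS := hp S hS
  rw [(htop S hSk).image_eq] at hpS
  obtain ⟨x, hx, rfl⟩ := hpS
  refine hGP S hSk x hx (Finset.mem_filter.2 ⟨hfin.mem_toFinset.2 ?_, hW⟩)
  refine Set.mem_iUnion.2
    ⟨⟨_, isFiniteMeeting_filter_card_le hq hcard hne hdisj hle⟩, Set.mem_iInter₂.2 fun T hT => ?_⟩
  exact hpF T (Finset.mem_filter.1 hT).1 (Finset.mem_filter.1 hT).2

/-- Trivial winding is stable under small perturbations of the map and of the point. -/
lemma exists_pos_forall_not_inWne {N k : ℕ} {f : (Fin (N + 1) → ℝ) → Euc k}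
    {S : Finset (Fin (N + 1))} {p : Euc k} (hf : ContinuousOn f (simpFaceBoundary S))
    (h : ¬ InWne k f S p) :
    ∃ η > 0, ∀ (f' : (Fin (N + 1) → ℝ) → Euc k) (p' : Euc k),
      ContinuousOn f' (simpFaceBoundary S) → (∀ x ∈ simpFaceBoundary S, ‖f' x - f x‖ < η) →
      ‖p' - p‖ < η → ¬ InWne k f' S p' := by
  simp only [InWne, not_or, not_not] at h
  obtain ⟨hp, g, y, hg, hhom⟩ := h
  obtain ⟨δ, hδ, hball⟩ := Metric.isOpen_iff.1
    ((isCompact_simpFaceBoundary S).image_of_continuousOn hf).isClosed.isOpen_compl p hp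
  refine ⟨δ / 2, half_pos hδ, fun f' p' hf' hff' hpp' => ?_⟩
  have hfar : ∀ x ∈ simpFaceBoundary S, δ ≤ ‖f x - p‖ := fun x hx => by
    by_contra hlt
    exact hball (mem_ball_iff_norm.2 (not_le.1 hlt)) ⟨x, hx, rfl⟩
  have hline : ∀ x ∈ simpFaceBoundary S, ∀ t : unitInterval,
      f' x + t.1 • (f x - p + p' - f' x) ∈ ({p'}ᶜ : Set (Euc k)) := by
    intro x hx t hmem
    have heq : f x - p = (1 - t.1) • ((f x - f' x) + (p' - p)) := by
      rw [Set.mem_singleton_iff, ← sub_eq_zero] at hmem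
      rw [← sub_eq_zero, ← hmem]
      module
    have h1 : ‖f x - p‖ ≤ ‖(f x - f' x) + (p' - p)‖ := by
      rw [heq, norm_smul]
      refine mul_le_of_le_one_left (norm_nonneg _) ?_
      rw [Real.norm_eq_abs, abs_le]
      constructor <;> linarith [t.2.1, t.2.2]
    have h2 := norm_add_le (f x - f' x) (p' - p)
    have h3 := hff' x hx
    rw [norm_sub_rev] at h3
    linarith [hfar x hx]
  have hf'p : ∀ x : simpFaceBoundary S, f' x ∈ ({p'}ᶜ : Set (Euc k)) := fun x => by
    simpa using hline x x.2 0
  let g' : C(simpFaceBoundary S, ({p'}ᶜ : Set (Euc k))) :=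
    ⟨fun x => ⟨f' x, hf'p x⟩, hf'.domRestrict.subtype_mk _⟩
  let T : C(({p}ᶜ : Set (Euc k)), ({p'}ᶜ : Set (Euc k))) :=
    ⟨fun z => ⟨z.1 - p + p', fun h => z.2 (by simpa [sub_eq_zero] using h)⟩, by fun_prop⟩
  have hT : g'.Homotopic (T.comp g) := by
    have hc : Continuous fun z : unitInterval × simpFaceBoundary S =>
        f' z.2 + z.1.1 • (f z.2 - p + p' - f' z.2) := by
      have h1 : Continuous fun z : unitInterval × simpFaceBoundary S => f z.2 :=
        hf.domRestrict.comp continuous_snd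
      have h2 : Continuous fun z : unitInterval × simpFaceBoundary S => f' z.2 :=
        hf'.domRestrict.comp continuous_snd
      exact h2.add ((continuous_subtype_val.comp continuous_fst).smul
        (((h1.sub continuous_const).add continuous_const).sub h2))
    refine ⟨⟨⟨fun z => ⟨_, hline z.2 z.2.2 z.1⟩, hc.subtype_mk _⟩, fun x => ?_, fun x => ?_⟩⟩
    · exact Subtype.ext (by simp; rfl)
    · exact Subtype.ext (by simp [T, hg])
  simp only [InWne, not_or, not_not]
  refine ⟨?_, g', T y, fun x => rfl, hT.trans ((ContinuousMap.Homotopic.refl T).comp hhom)⟩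
  rintro ⟨x, hx, hxp⟩
  exact hf'p ⟨x, hx⟩ hxp

/-- A limit of winding partitions is a winding partition. -/
lemma exists_isWindingPartition_of_approx {k q : ℕ} (hk : 1 ≤ k) (hq : 1 ≤ q)
    (f : C(Fin ((k + 1) * (q - 1) + 1) → ℝ, Euc k))
    (happrox : ∀ ε > 0, ∃ F : C(Fin ((k + 1) * (q - 1) + 1) → ℝ, Euc k),
      (∀ x ∈ stdSimp ((k + 1) * (q - 1)), ‖F x - f x‖ < ε) ∧ ∃ P, IsWindingPartition k q F P) :
    ∃ P, IsWindingPartition k q f P := by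
  have hpos : ∀ n : ℕ, (0 : ℝ) < 1 / ((n : ℝ) + 1) := fun n => Nat.one_div_pos_of_nat
  choose F hF Q hcard hne hle hdisj p hp using fun n : ℕ => happrox _ (hpos n)
  obtain ⟨𝒬, h𝒬⟩ := Finite.exists_infinite_fiber Q
  obtain ⟨φ, hφ, hφ𝒬⟩ := Filter.extraction_of_frequently_atTop
    (Nat.frequently_atTop_iff_infinite.2 (Set.infinite_coe_iff.1 h𝒬))
  replace hφ𝒬 : ∀ n, Q (φ n) = 𝒬 := hφ𝒬
  have hcard' := hcard (φ 0)
  have hne' := hne (φ 0)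
  have hle' := hle (φ 0)
  have hdisj' := hdisj (φ 0)
  rw [hφ𝒬] at hcard' hne' hle' hdisj'
  obtain ⟨S₀, hS₀⟩ : (𝒬.filter (·.card ≤ k)).Nonempty := by
    rw [Finset.nonempty_iff_ne_empty]
    intro h
    have := (isFiniteMeeting_filter_card_le hq hcard' hne' hdisj' hle').2.2
    rw [h] at this
    simp at this
    omega
  rw [Finset.mem_filter] at hS₀
  have hp' : ∀ n, ∀ S ∈ 𝒬, (S.card ≤ k → p (φ n) ∈ F (φ n) '' simpFace S) ∧
      (S.card = k + 1 → InWne k (F (φ n)) S (p (φ n))) := fun n S hS =>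
    hp (φ n) S (by rwa [hφ𝒬])
  have hK : IsCompact (Metric.cthickening 1 (f '' stdSimp ((k + 1) * (q - 1)))) :=
    ((isCompact_stdSimp _).image f.continuous).cthickening
  have hpK : ∀ n, p (φ n) ∈ Metric.cthickening 1 (f '' stdSimp ((k + 1) * (q - 1))) := by
    intro n
    obtain ⟨x, hx, hxp⟩ := (hp' n S₀ hS₀.1).1 hS₀.2
    refine Metric.mem_cthickening_of_dist_le _ (f x) _ _ ⟨x, hx.1, rfl⟩ ?_
    rw [← hxp, dist_eq_norm]
    refine (hF _ x hx.1).le.trans ?_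
    rw [div_le_one (by positivity)]
    linarith [Nat.cast_nonneg (α := ℝ) (φ n)]
  obtain ⟨p₀, -, ψ, hψ, hlim⟩ := hK.tendsto_subseq hpK
  have hclose : ∀ ε > 0, ∃ n, 1 / ((φ n : ℝ) + 1) < ε ∧ ‖p (φ n) - p₀‖ < ε := by
    intro ε hε
    have h1 := Metric.tendsto_nhds.1 hlim ε hε
    have h2 := (tendsto_one_div_add_atTop_nhds_zero_nat (𝕜 := ℝ)).comp
      (hφ.comp hψ).tendsto_atTop
    obtain ⟨n, hn1, hn2⟩ := (h1.and (h2.eventually (gt_mem_nhds hε))).exists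
    exact ⟨ψ n, hn2, by simpa [dist_eq_norm] using hn1⟩
  refine ⟨𝒬, hcard', hne', hle', hdisj', p₀, fun S hS => ⟨fun hSk => ?_, fun hSk => ?_⟩⟩
  · rw [← ((isCompact_simpFace S).image f.continuous).isClosed.closure_eq, Metric.mem_closure_iff]
    intro ε hε
    obtain ⟨n, hn1, hn2⟩ := hclose _ (half_pos hε)
    obtain ⟨x, hx, hxp⟩ := (hp' n S hS).1 hSk
    refine ⟨f x, ⟨x, hx, rfl⟩, (dist_triangle_left _ _ (p (φ n))).trans_lt ?_⟩
    have := hF (φ n) x hx.1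
    rw [dist_eq_norm, dist_eq_norm]
    rw [hxp] at this
    linarith
  · by_contra hW
    obtain ⟨η, hη, hstab⟩ := exists_pos_forall_not_inWne f.continuous.continuousOn hW
    obtain ⟨n, hn1, hn2⟩ := hclose η hη
    exact hstab (F (φ n)) (p (φ n)) (F _).continuous.continuousOn
      (fun x hx => (hF _ x hx.1.1).trans hn1) hn2 ((hp' n S hS).2 hSk)

lemma IsWindingPartition.congr {k q N : ℕ} (hk : 1 ≤ k) {f f' : (Fin (N + 1) → ℝ) → Euc k}
    (h : Set.EqOn f f' (skel N (k - 1))) {P : Finset (Finset (Fin (N + 1)))}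
    (hP : IsWindingPartition k q f P) : IsWindingPartition k q f' P := by
  obtain ⟨hcard, hne, hle, hdisj, p, hp⟩ := hP
  refine ⟨hcard, hne, hle, hdisj, p, fun S hS => ⟨fun hSk => ?_, fun hSk => ?_⟩⟩
  · rw [← (h.mono (simpFace_subset_skel (by omega))).image_eq]
    exact (hp S hS).1 hSk
  · have hb := h.mono (simpFaceBoundary_subset_skel (S := S) (k := k - 1) (by omega))
    have := (hp S hS).2 hSk
    simp only [InWne, hb.image_eq] at this
    simpa only [InWne, fun x : simpFaceBoundary S => hb x.2] using this

/-- For `k ≥ 3`, the `k`-Skeleton Conjecture implies the Winding Number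
Conjecture in dimension `k`. -/
theorem dSkeleton_implies_winding_high_dim (k q : ℕ) (hk : 3 ≤ k) (hq : 1 ≤ q)
    (H : ∀ g : (Fin ((k+1)*(q-1)+1) → ℝ) → Euc k,
      ContinuousOn g (skel ((k+1)*(q-1)) k) →
      ∃ P : Finset (Finset (Fin ((k+1)*(q-1)+1))),
        IsTverbergPartition q g P ∧ ∀ S ∈ P, S.card ≤ k + 1) :
    ∀ f : (Fin ((k+1)*(q-1)+1) → ℝ) → Euc k,
      ContinuousOn f (skel ((k+1)*(q-1)) (k-1)) →
      ∃ P : Finset (Finset (Fin ((k+1)*(q-1)+1))), IsWindingPartition k q f P := by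
  intro f hf
  obtain ⟨f₀, hf₀⟩ := ContinuousMap.exists_restrict_eq (isClosed_skel _ _) ⟨_, hf.domRestrict⟩
  have hf₀f : Set.EqOn f₀ f (skel ((k+1)*(q-1)) (k-1)) := fun x hx =>
    DFunLike.congr_fun hf₀ ⟨x, hx⟩
  obtain ⟨P, hP⟩ := exists_isWindingPartition_of_approx (by omega) hq f₀ fun ε hε => by
    obtain ⟨F, hFf, hF⟩ := exists_approx_finite_iInter_image (by omega) f₀ hε
    exact ⟨F, hFf, exists_isWindingPartition_of_finite hk hq H F hF⟩
  exact ⟨P, hP.congr (by omega) hf₀f⟩
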